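/- Let R be a commutative ring, n ≥ 2, and N ≥ 1. Suppose that every element of E(2,R) can be written as a product v₁·v₂·⋯·v_N of N matrices lying alternately in U⁺(2,R) and U⁻(2,R) (starting with U⁺(2,R)). Then every element of E(n,R) can be written as a product u₁·u₂·⋯·u_N of N matrices lying alternately in U⁺(n,R) and U⁻(n,R) (starting with U⁺(n,R)). -/

import Mathlib

/-!
The proof is Tavgen's rank reduction trick, applied directly to Levi subgroups of type `A₁`.
Let `Y` be the set of all alternating products `U⁺U⁻U⁺⋯` of `N` factors in `SL(n,R)`. Fix two
consecutive coordinates `i, i + 1`, let `L ≅ SL(2,R)` be the copy of `SL(2,R)` acting on them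
(`embSL`), and let `V±` be the subgroup of `U±` given by the vanishing of the entries at
`(i, i+1)` and `(i+1, i)`. Then `U± = U±(L) V±` (`levi_decomp`) and `L` normalizes both `V⁺` and
`V⁻` (`mergedWeight_conj`), so all the factors from `L` can be moved to the left:
`Y = (U⁺(L) U⁻(L) ⋯) (V⁺ V⁻ ⋯) = E(L) (V⁺ V⁻ ⋯)`, the last step being the hypothesis on `E(2,R)`.
Hence `E(L) Y = Y` (`embSL_mul_isAlternating`). The groups `E(L)` for the various `i` contain the
transvections `e_{i,i+1}(r)`, `e_{i+1,i}(r)`, which generate `E(n,R)` by the commutator relations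
(`elementary_le`). So `E(n,R) Y = Y`, and since `1 ∈ Y` it follows that `E(n,R) ⊆ Y`.
-/

/-!
STATEMENT 3. Let `R` be a commutative ring, `n ≥ 2`, and `N ≥ 1`. Suppose that every
element of `E(2,R)` can be written as a product of `N` matrices lying alternately in
`U⁺(2,R)` and `U⁻(2,R)` (starting with `U⁺(2,R)`). Then every element of `E(n,R)` can
be written as a product of `N` matrices lying alternately in `U⁺(n,R)` and `U⁻(n,R)`
(starting with `U⁺(n,R)`).
-/

/-- The set of elementary transvections `e_{ij}(r) = 1 + r·E_{ij}`, `i ≠ j`, in `SL(n,R)`. -/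
def ElemTransvections (n : ℕ) (R : Type) [CommRing R] :
    Set (Matrix.SpecialLinearGroup (Fin n) R) :=
  {g | ∃ (i j : Fin n) (r : R), i ≠ j ∧
    (g : Matrix (Fin n) (Fin n) R) = Matrix.transvection i j r}

/-- The elementary subgroup `E(n,R) ≤ SL(n,R)` generated by all elementary transvections. -/
def ElementarySubgroup (n : ℕ) (R : Type) [CommRing R] :
    Subgroup (Matrix.SpecialLinearGroup (Fin n) R) :=
  Subgroup.closure (ElemTransvections n R)

/-- The set `U⁺(n,R)` of upper triangular matrices in `SL(n,R)` with all diagonal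
entries equal to `1`. -/
def UnitriangularUpper (n : ℕ) (R : Type) [CommRing R] :
    Set (Matrix.SpecialLinearGroup (Fin n) R) :=
  {g | (∀ i : Fin n, (g : Matrix (Fin n) (Fin n) R) i i = 1) ∧
       ∀ i j : Fin n, j < i → (g : Matrix (Fin n) (Fin n) R) i j = 0}

/-- The set `U⁻(n,R)` of lower triangular matrices in `SL(n,R)` with all diagonal
entries equal to `1`. -/
def UnitriangularLower (n : ℕ) (R : Type) [CommRing R] :
    Set (Matrix.SpecialLinearGroup (Fin n) R) :=
  {g | (∀ i : Fin n, (g : Matrix (Fin n) (Fin n) R) i i = 1) ∧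
       ∀ i j : Fin n, i < j → (g : Matrix (Fin n) (Fin n) R) i j = 0}

/-- `g = u₁ ⋯ u_N` where the `uₖ` lie alternately in `U⁺(n,R)` and `U⁻(n,R)`,
starting with `U⁺(n,R)`. -/
def IsAlternatingUnitriangularProd (n : ℕ) (R : Type) [CommRing R] (N : ℕ)
    (g : Matrix.SpecialLinearGroup (Fin n) R) : Prop :=
  ∃ u : Fin N → Matrix.SpecialLinearGroup (Fin n) R,
    (∀ i : Fin N, (i.val % 2 = 0 → u i ∈ UnitriangularUpper n R) ∧
                  (i.val % 2 = 1 → u i ∈ UnitriangularLower n R)) ∧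
    g = (List.ofFn u).prod

open Matrix

/-! ### Unipotent groups attached to a weight -/

/-- The matrices `g ∈ SL(n,R)` for which `g - 1` is supported on the positions `(a, b)` with
`w a < w b`. For `w` the inclusion `Fin n → ℤ` this is `U⁺(n,R)`, for its negative it is
`U⁻(n,R)`; if `w` is constant on some consecutive indices it is the unipotent radical of the
corresponding parabolic subgroup. -/
def weightUnipotent {n : ℕ} (R : Type) [CommRing R] (w : Fin n → ℤ) :
    Set (Matrix.SpecialLinearGroup (Fin n) R) :=
  {g | ∀ a b : Fin n, w b ≤ w a →
    (g : Matrix (Fin n) (Fin n) R) a b = (1 : Matrix (Fin n) (Fin n) R) a b}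

section

variable {R : Type} [CommRing R] {n : ℕ}

theorem mul_mem_weightUnipotent {w : Fin n → ℤ} {g h : Matrix.SpecialLinearGroup (Fin n) R}
    (hg : g ∈ weightUnipotent R w) (hh : h ∈ weightUnipotent R w) :
    g * h ∈ weightUnipotent R w := by
  intro a b hab
  have key : ((g * h : Matrix.SpecialLinearGroup (Fin n) R) : Matrix (Fin n) (Fin n) R) - 1 =
      (g.1 - 1) * (h.1 - 1) + (g.1 - 1) + (h.1 - 1) := by
    rw [Matrix.SpecialLinearGroup.coe_mul]; noncomm_ring
  have h0 : ((g.1 - 1) * (h.1 - 1)) a b = 0 := by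
    rw [Matrix.mul_apply]
    refine Finset.sum_eq_zero fun c _ => ?_
    rcases le_or_gt (w c) (w a) with hc | hc
    · rw [Matrix.sub_apply, hg a c hc, sub_self, zero_mul]
    · rw [Matrix.sub_apply h.1, hh c b (by omega), sub_self, mul_zero]
  have := congrFun (congrFun key a) b
  simp only [Matrix.add_apply, h0] at this
  simp only [Matrix.sub_apply] at this
  rw [hg a b hab, hh a b hab] at this
  simpa [sub_eq_zero] using this

theorem weightUnipotent_mono {w w' : Fin n → ℤ} (h : ∀ a b, w' b ≤ w' a → w b ≤ w a) :
    weightUnipotent R w ⊆ weightUnipotent R w' :=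
  fun _ hg a b hab => hg a b (h a b hab)

/-- A matrix that is block diagonal for the level sets of `w`, with inverse of the same shape,
normalizes `weightUnipotent R w`. -/
theorem conj_mem_weightUnipotent {w : Fin n → ℤ} {g l : Matrix.SpecialLinearGroup (Fin n) R}
    (hl : ∀ a b, w a ≠ w b → l.1 a b = 0) (hl' : ∀ a b, w a ≠ w b → (l⁻¹).1 a b = 0)
    (hg : g ∈ weightUnipotent R w) : l * g * l⁻¹ ∈ weightUnipotent R w := by
  intro a b hab
  have hone : l.1 * (l⁻¹).1 = 1 := by
    rw [← Matrix.SpecialLinearGroup.coe_mul, mul_inv_cancel, Matrix.SpecialLinearGroup.coe_one]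
  have key : ((l * g * l⁻¹ : Matrix.SpecialLinearGroup (Fin n) R) : Matrix (Fin n) (Fin n) R) - 1 =
      l.1 * (g.1 - 1) * (l⁻¹).1 := by
    rw [Matrix.SpecialLinearGroup.coe_mul, Matrix.SpecialLinearGroup.coe_mul, mul_sub, sub_mul, mul_one, hone]
  rw [← sub_eq_zero, ← Matrix.sub_apply, key, Matrix.mul_apply]
  refine Finset.sum_eq_zero fun c _ => ?_
  by_cases hcb : w c = w b
  · rw [Matrix.mul_apply, Finset.sum_eq_zero, zero_mul]
    intro d _
    by_cases had : w a = w d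
    · rw [Matrix.sub_apply, hg d c (by omega), sub_self, mul_zero]
    · rw [hl a d had, zero_mul]
  · rw [hl' c b hcb, mul_zero]

/-- The weight cutting out `U⁺(n,R)` (for even `k`) or `U⁻(n,R)` (for odd `k`). -/
def altWeight (k : ℕ) (a : Fin n) : ℤ := if k % 2 = 0 then (a : ℤ) else -(a : ℤ)

theorem mem_upper_iff {g : Matrix.SpecialLinearGroup (Fin n) R} {k : ℕ} (hk : k % 2 = 0) :
    g ∈ UnitriangularUpper n R ↔ g ∈ weightUnipotent R (altWeight k) := by
  constructor
  · rintro ⟨h1, h2⟩ a b hab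
    simp only [altWeight, hk, if_true] at hab
    by_cases h : a = b
    · subst h; simpa using h1 a
    · rw [Matrix.one_apply_ne h]; exact h2 a b (by omega)
  · intro h
    refine ⟨fun a => by simpa using h a a le_rfl, fun a b hab => ?_⟩
    rw [h a b (by simp only [altWeight, hk, if_true]; omega), Matrix.one_apply_ne hab.ne']

theorem mem_lower_iff {g : Matrix.SpecialLinearGroup (Fin n) R} {k : ℕ} (hk : k % 2 = 1) :
    g ∈ UnitriangularLower n R ↔ g ∈ weightUnipotent R (altWeight k) := by
  have hk' : ¬ (k % 2 = 0) := by omega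
  constructor
  · rintro ⟨h1, h2⟩ a b hab
    simp only [altWeight, hk', if_false] at hab
    by_cases h : a = b
    · subst h; simpa using h1 a
    · rw [Matrix.one_apply_ne h]; exact h2 a b (by omega)
  · intro h
    refine ⟨fun a => by simpa using h a a le_rfl, fun a b hab => ?_⟩
    rw [h a b (by simp only [altWeight, hk', if_false]; omega), Matrix.one_apply_ne hab.ne]

theorem isAlternating_iff {N : ℕ} {g : Matrix.SpecialLinearGroup (Fin n) R} :
    IsAlternatingUnitriangularProd n R N g ↔
      ∃ u : Fin N → Matrix.SpecialLinearGroup (Fin n) R,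
        (∀ k : Fin N, u k ∈ weightUnipotent R (altWeight k.val)) ∧ g = (List.ofFn u).prod := by
  refine exists_congr fun u => and_congr (forall_congr' fun k => ?_) Iff.rfl
  rcases Nat.mod_two_eq_zero_or_one k.val with hk | hk
  · simp [hk, mem_upper_iff hk]
  · simp [hk, mem_lower_iff hk]

/-! ### Collecting factors -/

/-- If the `vₖ` lie in sets normalized by all values of `φ`, the product of the `φ(aₖ) vₖ` can be
rearranged into `φ(a₁ ⋯ a_N)` times a product of elements of the same sets. -/
theorem collect {L G : Type*} [Group L] [Group G] (φ : L →* G) {N : ℕ} (V : Fin N → Set G)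
    (hV : ∀ k x, ∀ v ∈ V k, φ x * v * (φ x)⁻¹ ∈ V k) (a : Fin N → L) (v : Fin N → G)
    (hv : ∀ k, v k ∈ V k) :
    ∃ v' : Fin N → G, (∀ k, v' k ∈ V k) ∧
      (List.ofFn fun k => φ (a k) * v k).prod = φ (List.ofFn a).prod * (List.ofFn v').prod := by
  induction N with
  | zero => exact ⟨v, hv, by simp⟩
  | succ N ih =>
    obtain ⟨v', hv', h⟩ := ih (fun k => V k.succ) (fun k => hV k.succ) (fun k => a k.succ)
      (fun k => v k.succ) (fun k => hv k.succ)
    have h0 := hV 0 (List.ofFn fun k : Fin N => a k.succ).prod⁻¹ (v 0) (hv 0)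
    refine ⟨Fin.cons _ v', Fin.cases h0 hv', ?_⟩
    simp only [List.ofFn_succ, List.prod_cons, h, map_mul, map_inv, Fin.cons_zero, Fin.cons_succ]
    group

/-- The reverse of `collect`. -/
theorem distribute {L G : Type*} [Group L] [Group G] (φ : L →* G) {N : ℕ} (V : Fin N → Set G)
    (hV : ∀ k x, ∀ v ∈ V k, φ x * v * (φ x)⁻¹ ∈ V k) (a : Fin N → L) (v : Fin N → G)
    (hv : ∀ k, v k ∈ V k) :
    ∃ v' : Fin N → G, (∀ k, v' k ∈ V k) ∧
      φ (List.ofFn a).prod * (List.ofFn v).prod = (List.ofFn fun k => φ (a k) * v' k).prod := by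
  induction N with
  | zero => exact ⟨v, hv, by simp⟩
  | succ N ih =>
    obtain ⟨v', hv', h⟩ := ih (fun k => V k.succ) (fun k => hV k.succ) (fun k => a k.succ)
      (fun k => v k.succ) (fun k => hv k.succ)
    have h0 := hV 0 (List.ofFn fun k : Fin N => a k.succ).prod (v 0) (hv 0)
    refine ⟨Fin.cons _ v', Fin.cases h0 hv', ?_⟩
    simp only [List.ofFn_succ, List.prod_cons, ← h, map_mul, Fin.cons_zero, Fin.cons_succ]
    group

/-! ### The copy of `SL(2,R)` in a pair of coordinates -/

/-- The `n × 2` matrix whose columns are the basis vectors `e_{s 0}`, `e_{s 1}`. -/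
def inclMat (R : Type) [CommRing R] (s : Fin 2 → Fin n) : Matrix (Fin n) (Fin 2) R :=
  Matrix.of fun a k => if a = s k then 1 else 0

theorem inclMat_transpose_mul {s : Fin 2 → Fin n} (hs : Function.Injective s) :
    (inclMat R s)ᵀ * inclMat R s = 1 := by
  ext k l
  simp [inclMat, Matrix.mul_apply, Matrix.one_apply, hs.eq_iff, eq_comm]

/-- The embedding of `SL(2,R)` into `SL(n,R)` acting on the coordinates `s 0`, `s 1` and fixing
the others, written as `A ↦ 1 + P (A - 1) Pᵀ` with `PᵀP = 1`. -/
def embSL (s : Fin 2 → Fin n) (hs : Function.Injective s) :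
    Matrix.SpecialLinearGroup (Fin 2) R →* Matrix.SpecialLinearGroup (Fin n) R where
  toFun A := ⟨1 + inclMat R s * ((A.1 - 1) * (inclMat R s)ᵀ), by
    rw [Matrix.det_one_add_mul_comm, Matrix.mul_assoc, inclMat_transpose_mul hs, mul_one,
      add_sub_cancel, A.2]⟩
  map_one' := by
    apply Subtype.ext
    simp
  map_mul' A B := by
    apply Subtype.ext
    have hP : ∀ M : Matrix (Fin 2) (Fin n) R,
        (inclMat R s)ᵀ * (inclMat R s * M) = M := fun M => by
      rw [← Matrix.mul_assoc, inclMat_transpose_mul hs, Matrix.one_mul]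
    change 1 + inclMat R s * ((A.1 * B.1 - 1) * (inclMat R s)ᵀ) =
      (1 + inclMat R s * ((A.1 - 1) * (inclMat R s)ᵀ)) *
        (1 + inclMat R s * ((B.1 - 1) * (inclMat R s)ᵀ))
    have : A.1 * B.1 - 1 = (A.1 - 1) + (B.1 - 1) + (A.1 - 1) * (B.1 - 1) := by noncomm_ring
    simp only [this, Matrix.add_mul, Matrix.mul_add, Matrix.mul_assoc, hP, Matrix.one_mul,
      Matrix.mul_one]
    abel

theorem embSL_coe (s : Fin 2 → Fin n) (hs : Function.Injective s)
    (A : Matrix.SpecialLinearGroup (Fin 2) R) :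
    (embSL s hs A).1 = 1 + inclMat R s * ((A.1 - 1) * (inclMat R s)ᵀ) := rfl

theorem embSL_apply (s : Fin 2 → Fin n) (hs : Function.Injective s)
    (A : Matrix.SpecialLinearGroup (Fin 2) R) (a b : Fin n) :
    (embSL s hs A).1 a b = (1 : Matrix (Fin n) (Fin n) R) a b +
      ∑ k, ∑ l, if a = s k ∧ b = s l then (A.1 - 1) k l else 0 := by
  rw [embSL_coe, Matrix.add_apply, Matrix.mul_apply]
  congr 1
  refine Finset.sum_congr rfl fun k _ => ?_
  rw [Matrix.mul_apply, Finset.mul_sum]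
  refine Finset.sum_congr rfl fun l _ => ?_
  by_cases h1 : a = s k <;> by_cases h2 : b = s l <;> simp [inclMat, h1, h2]

theorem embSL_mul_apply (s : Fin 2 → Fin n) (hs : Function.Injective s)
    (A : Matrix.SpecialLinearGroup (Fin 2) R) (M : Matrix (Fin n) (Fin n) R) (k : Fin 2) (b : Fin n) :
    ((embSL s hs A).1 * M) (s k) b = ∑ l, A.1 k l * M (s l) b := by
  rw [embSL_coe, Matrix.add_mul, Matrix.one_mul, Matrix.mul_assoc, Matrix.mul_assoc]
  have h1 : ∀ l, ((inclMat R s)ᵀ * M) l b = M (s l) b := fun l => by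
    simp [inclMat, Matrix.mul_apply]
  have h2 : ∀ X : Matrix (Fin 2) (Fin n) R, (inclMat R s * X) (s k) b = X k b := fun X => by
    simp [inclMat, Matrix.mul_apply, hs.eq_iff]
  rw [Matrix.add_apply, h2, Matrix.sub_mul, Matrix.one_mul, Matrix.sub_apply, h1, Matrix.mul_apply]
  simp only [h1]
  ring

/-- The embedding sends `U±(2,R)` to `U±(n,R)` when `s` is increasing. -/
theorem embSL_mem {s : Fin 2 → Fin n} (hs : StrictMono s) {A : Matrix.SpecialLinearGroup (Fin 2) R}
    {k : ℕ} (hA : A ∈ weightUnipotent R (altWeight k)) :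
    embSL s hs.injective A ∈ weightUnipotent R (altWeight k) := by
  intro a b hab
  rw [embSL_apply, Finset.sum_eq_zero, add_zero]
  refine fun p _ => Finset.sum_eq_zero fun q _ => ?_
  split_ifs with h
  · obtain ⟨rfl, rfl⟩ := h
    rw [Matrix.sub_apply, hA p q, sub_self]
    have h1 := hs.le_iff_le (a := p) (b := q)
    have h2 := hs.le_iff_le (a := q) (b := p)
    simp only [altWeight] at hab ⊢
    split_ifs at hab ⊢ <;> omega
  · rfl

/-- The weight `altWeight k` with the values at the two consecutive indices `i` and `i + 1` made
equal. -/
def mergedWeight (i : ℕ) (k : ℕ) (a : Fin n) : ℤ :=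
  if k % 2 = 0 then (if a.val = i + 1 then (i : ℤ) else a)
  else -(if a.val = i + 1 then (i : ℤ) else a)

theorem embSL_blockDiagonal {s : Fin 2 → Fin n} (hs : StrictMono s)
    (h01 : (s 1).val = (s 0).val + 1) (k : ℕ) (A : Matrix.SpecialLinearGroup (Fin 2) R) (a b : Fin n)
    (hab : mergedWeight (s 0).val k a ≠ mergedWeight (s 0).val k b) :
    (embSL s hs.injective A).1 a b = 0 := by
  have hne : a ≠ b := by rintro rfl; exact hab rfl
  have hm : ∀ p, mergedWeight (s 0).val k (s p) = mergedWeight (s 0).val k (s 0) := by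
    intro p
    fin_cases p
    · rfl
    · simp [mergedWeight, h01]
  rw [embSL_apply, Matrix.one_apply_ne hne, zero_add]
  refine Finset.sum_eq_zero fun p _ => Finset.sum_eq_zero fun q _ => ?_
  rw [if_neg]
  rintro ⟨rfl, rfl⟩
  exact hab ((hm p).trans (hm q).symm)

theorem mergedWeight_conj {s : Fin 2 → Fin n} (hs : StrictMono s)
    (h01 : (s 1).val = (s 0).val + 1) (k : ℕ) (A : Matrix.SpecialLinearGroup (Fin 2) R)
    {v : Matrix.SpecialLinearGroup (Fin n) R} (hv : v ∈ weightUnipotent R (mergedWeight (s 0).val k)) :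
    embSL s hs.injective A * v * (embSL s hs.injective A)⁻¹ ∈
      weightUnipotent R (mergedWeight (s 0).val k) := by
  refine conj_mem_weightUnipotent (embSL_blockDiagonal hs h01 k A) ?_ hv
  rw [← map_inv]
  exact embSL_blockDiagonal hs h01 k A⁻¹

theorem merged_subset (i k : ℕ) :
    weightUnipotent R (mergedWeight (n := n) i k) ⊆ weightUnipotent R (altWeight k) := by
  refine weightUnipotent_mono fun a b h => ?_
  simp only [altWeight, mergedWeight] at h ⊢
  split_ifs at h ⊢ <;> omega

theorem transvection_mem_elementary {i j : Fin n} (h : i ≠ j) (r : R) :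
    Matrix.SpecialLinearGroup.transvection h r ∈
      ElementarySubgroup n R :=
  Subgroup.subset_closure ⟨i, j, r, h, rfl⟩

/-- Every element of `U±(n,R)` is an elementary matrix of the Levi subgroup times an element of the
unipotent radical. -/
theorem levi_decomp {s : Fin 2 → Fin n} (hs : StrictMono s) (h01 : (s 1).val = (s 0).val + 1)
    (k : ℕ) {u : Matrix.SpecialLinearGroup (Fin n) R} (hu : u ∈ weightUnipotent R (altWeight k)) :
    ∃ A ∈ ElementarySubgroup 2 R, ∃ v ∈ weightUnipotent R (mergedWeight (s 0).val k),
      u = embSL s hs.injective A * v := by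
  -- It suffices to kill the entry of `u` at the one position where the two weights differ.
  suffices H : ∃ B ∈ ElementarySubgroup 2 R, B ∈ weightUnipotent R (altWeight k) ∧
      ∀ a b, mergedWeight (s 0).val k b ≤ mergedWeight (s 0).val k a →
        ¬ altWeight k b ≤ altWeight k a →
        (embSL s hs.injective B * u).1 a b = (1 : Matrix (Fin n) (Fin n) R) a b by
    obtain ⟨B, hB, hB', h⟩ := H
    refine ⟨B⁻¹, inv_mem hB, embSL s hs.injective B * u, fun a b hab => ?_, by simp⟩
    by_cases h' : altWeight k b ≤ altWeight k a
    · exact mul_mem_weightUnipotent (embSL_mem hs hB') hu a b h'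
    · exact h a b hab h'
  have hdiag : ∀ a, u.1 a a = 1 := fun a => by simpa using hu a a le_rfl
  rcases Nat.mod_two_eq_zero_or_one k with hk | hk
  · refine ⟨_, transvection_mem_elementary (i := 0) (j := 1) (by decide) (-u.1 (s 0) (s 1)), ?_, ?_⟩
    · rw [← mem_upper_iff hk]
      constructor
      · intro a; fin_cases a <;> simp [Matrix.SpecialLinearGroup.transvection_coe]
      · intro a b hab; fin_cases a <;> fin_cases b <;> simp_all [Matrix.SpecialLinearGroup.transvection_coe]
    · intro a b h h'
      simp only [altWeight, mergedWeight, hk, if_true] at h h'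
      have hab : a = s 0 ∧ b = s 1 := by
        simp only [Fin.ext_iff, h01]
        split_ifs at h <;> omega
      obtain ⟨rfl, rfl⟩ := hab
      rw [Matrix.SpecialLinearGroup.coe_mul, embSL_mul_apply,
        Matrix.one_apply_ne (hs.injective.ne (by decide))]
      simp [Matrix.SpecialLinearGroup.transvection_coe, hdiag]
  · have hk' : ¬ (k % 2 = 0) := by omega
    refine ⟨_, transvection_mem_elementary (i := 1) (j := 0) (by decide) (-u.1 (s 1) (s 0)), ?_, ?_⟩
    · rw [← mem_lower_iff hk]
      constructor
      · intro a; fin_cases a <;> simp [Matrix.SpecialLinearGroup.transvection_coe]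
      · intro a b hab; fin_cases a <;> fin_cases b <;> simp_all [Matrix.SpecialLinearGroup.transvection_coe]
    · intro a b h h'
      simp only [altWeight, mergedWeight, hk', if_false] at h h'
      have hab : a = s 1 ∧ b = s 0 := by
        simp only [Fin.ext_iff, h01]
        split_ifs at h <;> omega
      obtain ⟨rfl, rfl⟩ := hab
      rw [Matrix.SpecialLinearGroup.coe_mul, embSL_mul_apply,
        Matrix.one_apply_ne (hs.injective.ne (by decide))]
      simp [Matrix.SpecialLinearGroup.transvection_coe, hdiag]

/-- The set of alternating products is stable under the elementary group of the copy of `SL(2,R)`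
in two consecutive coordinates. -/
theorem embSL_mul_isAlternating {N : ℕ}
    (h2 : ∀ g ∈ ElementarySubgroup 2 R, IsAlternatingUnitriangularProd 2 R N g)
    {s : Fin 2 → Fin n} (hs : StrictMono s) (h01 : (s 1).val = (s 0).val + 1)
    {x : Matrix.SpecialLinearGroup (Fin 2) R} (hx : x ∈ ElementarySubgroup 2 R)
    {y : Matrix.SpecialLinearGroup (Fin n) R} (hy : IsAlternatingUnitriangularProd n R N y) :
    IsAlternatingUnitriangularProd n R N (embSL s hs.injective x * y) := by
  obtain ⟨u, hu, rfl⟩ := isAlternating_iff.1 hy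
  choose A hA v hv huv using fun k : Fin N => levi_decomp hs h01 k.val (hu k)
  have hV := fun (k : Fin N) B v hv =>
    mergedWeight_conj (R := R) hs h01 k.val B (v := v) hv
  obtain ⟨v', hv', h⟩ := collect (embSL s hs.injective)
    (fun k : Fin N => weightUnipotent R (mergedWeight (s 0).val k.val)) hV A v hv
  have hxA : x * (List.ofFn A).prod ∈ ElementarySubgroup 2 R := by
    refine mul_mem hx (list_prod_mem fun g hg => ?_)
    obtain ⟨k, rfl⟩ := (List.mem_ofFn' _ _).1 hg
    exact hA k
  obtain ⟨B, hB, hxB⟩ := isAlternating_iff.1 (h2 _ hxA)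
  obtain ⟨v'', hv'', h'⟩ := distribute (embSL s hs.injective)
    (fun k : Fin N => weightUnipotent R (mergedWeight (s 0).val k.val)) hV B v' hv'
  refine isAlternating_iff.2 ⟨fun k => embSL s hs.injective (B k) * v'' k, fun k => ?_, ?_⟩
  · exact mul_mem_weightUnipotent (embSL_mem hs (hB k)) (merged_subset _ _ (hv'' k))
  · rw [← h', ← hxB, map_mul, mul_assoc, ← h, funext huv]

/-! ### Generation by neighbouring transvections -/

/-- The commutator relation `[e_{ij}(r), e_{jk}(1)] = e_{ik}(r)`. -/
theorem transvection_commutator {i j k : Fin n} (hij : i ≠ j) (hjk : j ≠ k) (hik : i ≠ k) (r : R) :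
    Matrix.SpecialLinearGroup.transvection hij r * Matrix.SpecialLinearGroup.transvection hjk 1 *
      Matrix.SpecialLinearGroup.transvection hij (-r) *
      Matrix.SpecialLinearGroup.transvection hjk (-1) =
        Matrix.SpecialLinearGroup.transvection hik r := by
  apply Subtype.ext
  simp only [Matrix.SpecialLinearGroup.coe_mul, Matrix.SpecialLinearGroup.transvection_coe,
    mul_add, add_mul, mul_one, one_mul,
    Matrix.single_mul_single_same, Matrix.single_mul_single_of_ne, ne_eq, hij.symm, hjk.symm,
    hik.symm, not_false_eq_true, add_zero, mul_neg]
  simp only [← Matrix.single_neg]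
  abel

/-- A subgroup containing the transvections in neighbouring coordinates contains `E(n,R)`. -/
theorem elementary_le {H : Subgroup (Matrix.SpecialLinearGroup (Fin n) R)}
    (hH : ∀ (i j : Fin n) (r : R) (hij : i ≠ j), i.val + 1 = j.val ∨ j.val + 1 = i.val →
      Matrix.SpecialLinearGroup.transvection hij r ∈ H) :
    ElementarySubgroup n R ≤ H := by
  have key : ∀ (d : ℕ) (i j : Fin n) (r : R) (hij : i ≠ j),
      i.val + 1 + d = j.val ∨ j.val + 1 + d = i.val →
      Matrix.SpecialLinearGroup.transvection hij r ∈ H := by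
    intro d
    induction d with
    | zero => exact hH
    | succ d ih =>
      intro i j r hij hd
      obtain ⟨m, hm1, hm2⟩ : ∃ m : Fin n, (i.val + 1 + d = m.val ∨ m.val + 1 + d = i.val) ∧
          (m.val + 1 = j.val ∨ j.val + 1 = m.val) := by
        rcases hd with hd | hd
        · exact ⟨⟨i.val + 1 + d, by omega⟩, Or.inl rfl, Or.inl (by simp; omega)⟩
        · exact ⟨⟨j.val + 1, by omega⟩, Or.inr (by simp; omega), Or.inr rfl⟩
      have him : i ≠ m := by rintro rfl; omega
      have hmj : m ≠ j := by rintro rfl; omega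
      have := mul_mem (mul_mem (mul_mem (ih i m r him hm1) (hH m j 1 hmj hm2))
        (ih i m (-r) him hm1)) (hH m j (-1) hmj hm2)
      rwa [transvection_commutator him hmj hij r] at this
  refine (Subgroup.closure_le _).2 ?_
  rintro g ⟨i, j, r, hij, hg⟩
  have : g = Matrix.SpecialLinearGroup.transvection hij r := Subtype.ext hg
  rw [this]
  rcases lt_or_gt_of_ne (Fin.val_ne_of_ne hij) with h | h
  · exact key (j.val - i.val - 1) i j r hij (Or.inl (by omega))
  · exact key (i.val - j.val - 1) i j r hij (Or.inr (by omega))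

theorem embSL_transvection (s : Fin 2 → Fin n) (hs : Function.Injective s) {p q : Fin 2}
    (hpq : p ≠ q) (r : R) :
    embSL s hs (Matrix.SpecialLinearGroup.transvection hpq r) =
      Matrix.SpecialLinearGroup.transvection (hs.ne hpq) r := by
  apply Subtype.ext
  ext a b
  rw [embSL_apply, Matrix.SpecialLinearGroup.transvection_coe,
    Matrix.SpecialLinearGroup.transvection_coe, Matrix.add_apply]
  congr 1
  simp only [add_sub_cancel_left, Matrix.single_apply]
  rw [Finset.sum_eq_single p, Finset.sum_eq_single q]
  · simp [eq_comm]
  · intro l _ hl; simp [hl.symm]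
  · simp
  · intro l _ hl; simp [hl.symm]
  · simp

end

theorem statement3 (R : Type) [CommRing R] (n : ℕ) (hn : 2 ≤ n) (N : ℕ) (hN : 1 ≤ N)
    (h2 : ∀ g ∈ ElementarySubgroup 2 R, IsAlternatingUnitriangularProd 2 R N g) :
    ∀ g ∈ ElementarySubgroup n R, IsAlternatingUnitriangularProd n R N g := by
  intro g hg
  have h1 : IsAlternatingUnitriangularProd n R N 1 :=
    isAlternating_iff.2 ⟨fun _ => 1, fun _ a b _ => by simp, by simp⟩
  -- The subgroup of those elements whose left translation preserves the set of products.
  let H : Subgroup (Matrix.SpecialLinearGroup (Fin n) R) :=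
    { carrier := {g | ∀ y, IsAlternatingUnitriangularProd n R N (g * y) ↔
        IsAlternatingUnitriangularProd n R N y}
      one_mem' := fun y => by rw [one_mul]
      mul_mem' := fun {a b} ha hb y => by rw [mul_assoc, ha, hb]
      inv_mem' := fun {a} ha y => by rw [← ha, mul_inv_cancel_left] }
  have hemb : ∀ (s : Fin 2 → Fin n) (hs : StrictMono s), (s 1).val = (s 0).val + 1 →
      ∀ x ∈ ElementarySubgroup 2 R, embSL s hs.injective x ∈ H := by
    intro s hs h01 x hx y
    refine ⟨fun h => ?_, embSL_mul_isAlternating h2 hs h01 hx⟩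
    have := embSL_mul_isAlternating h2 hs h01 (inv_mem hx) h
    rwa [map_inv, inv_mul_cancel_left] at this
  have hH : ElementarySubgroup n R ≤ H := by
    refine elementary_le fun i j r hij h => ?_
    rcases h with h | h
    · have hs : StrictMono ![i, j] := by
        rw [Fin.strictMono_iff_lt_succ]
        intro k; fin_cases k; simp; omega
      have := hemb ![i, j] hs h.symm _ (transvection_mem_elementary (i := 0) (j := 1) (by decide) r)
      rwa [embSL_transvection _ _ (by decide)] at this
    · have hs : StrictMono ![j, i] := by
        rw [Fin.strictMono_iff_lt_succ]
        intro k; fin_cases k; simp; omega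
      have := hemb ![j, i] hs h.symm _ (transvection_mem_elementary (i := 1) (j := 0) (by decide) r)
      rwa [embSL_transvection _ _ (by decide)] at this
  have := (hH hg 1).2 h1
  rwa [mul_one] at this
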